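/- arXiv:1305.4139 — 2 statements merged into one kernel-verified Lean document; each statement's English description precedes it below -/
import Mathlib

section
/- Let G be a finite group such that for every 2-element x of G, the index |G : C_G(x)| is odd. Then the Sylow 2-subgroups of G are abelian. -/
/-- A `p`-subgroup of a subgroup `H` of index prime to `p` lies in a Sylow `p`-subgroup of `G`
contained in `H`. -/
theorem IsPGroup.exists_le_sylow_le {G : Type*} [Group G] [Finite G] {p : ℕ} [Fact p.Prime]
    {D H : Subgroup G} (hD : IsPGroup p D) (hDH : D ≤ H) (hH : ¬ p ∣ H.index) :
    ∃ P : Sylow p G, D ≤ P ∧ (P : Subgroup G) ≤ H := by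
  have hD' : IsPGroup p (D.subgroupOf H) := hD.comap_subtype
  obtain ⟨S, hS⟩ := hD'.exists_le_sylow
  have hmap : IsPGroup p ((S : Subgroup H).map H.subtype) := S.isPGroup'.map _
  have hidx : ¬ p ∣ ((S : Subgroup H).map H.subtype).index := by
    rw [Subgroup.index_map_subtype, (Fact.out : p.Prime).dvd_mul, not_or]
    exact ⟨S.not_dvd_index, hH⟩
  refine ⟨hmap.toSylow hidx, fun d hd => ?_, ?_⟩
  · exact ⟨⟨d, hDH hd⟩, hS hd, rfl⟩
  · rw [IsPGroup.toSylow_coe]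
    exact Subgroup.map_subtype_le _

/-- Sylow subgroups of `G` contained in a subgroup `H` are conjugate under `H`. -/
theorem Sylow.exists_conj_mem_of_le {G : Type*} [Group G] [Finite G] {p : ℕ} [Fact p.Prime]
    {H : Subgroup G} (P Q : Sylow p G) (hP : (P : Subgroup G) ≤ H) (hQ : (Q : Subgroup G) ≤ H) :
    ∃ g ∈ H, ∀ x, x ∈ Q ↔ g * x * g⁻¹ ∈ P := by
  obtain ⟨g, hg⟩ := MulAction.exists_smul_eq H (Q.subtype hQ) (P.subtype hP)
  have hg' : (g : G) • Q = P := Sylow.subtype_injective ((Sylow.smul_subtype hQ g).symm.trans hg)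
  refine ⟨g, g.2, fun x => ?_⟩
  have : g * x * (g : G)⁻¹ ∈ (g : G) • Q ↔ x ∈ Q := by
    rw [← SetLike.mem_coe, Sylow.coe_smul, ← MulAut.conj_apply]
    exact Set.smul_mem_smul_set_iff (a := MulAut.conj (g : G))
  rw [← this, hg']

/-- If the centralizer of `w` has odd index, then `w` can be inverted by conjugation only if
`w ^ 2 = 1`. -/
theorem sq_eq_one_of_conj_eq_inv {G : Type*} [Group G] [Finite G] {w t : G}
    (hw : Odd (Subgroup.centralizer {w}).index) (ht : t * w * t⁻¹ = w⁻¹) : w ^ 2 = 1 := by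
  set C := Subgroup.centralizer {w} with hC
  have mem_C (g : G) : g ∈ C ↔ g * w * g⁻¹ = w := by
    rw [hC, Subgroup.mem_centralizer_singleton_iff, mul_inv_eq_iff_eq_mul]
  have key : t * w⁻¹ * t⁻¹ = w := by rw [← conj_inv, ht, inv_inv]
  have ht' : t⁻¹ * w * t = w⁻¹ := by
    have := congrArg (fun g => t⁻¹ * g⁻¹ * t) ht
    simpa [mul_assoc] using this.symm
  have htN : t ∈ Subgroup.normalizer (C : Set G) := by
    rw [Subgroup.mem_normalizer_iff]
    intro g
    have h1 : t * g * t⁻¹ * w * (t * g * t⁻¹)⁻¹ = t * (g * w * g⁻¹)⁻¹ * t⁻¹ := by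
      calc _ = t * (g * (t⁻¹ * w * t) * g⁻¹) * t⁻¹ := by group
        _ = _ := by rw [ht']; group
    rw [mem_C, mem_C, h1]
    refine ⟨fun e => by rw [e, key], fun e => ?_⟩
    exact inv_injective (mul_left_cancel (mul_right_cancel (e.trans key.symm)))
  have ht2 : t ^ 2 ∈ C := by
    rw [mem_C]
    calc t ^ 2 * w * (t ^ 2)⁻¹ = t * (t * w * t⁻¹) * t⁻¹ := by
          simp only [sq, mul_inv_rev, mul_assoc]
      _ = w := by rw [ht, key]
  let N := Subgroup.normalizer (C : Set G)
  let q : N ⧸ C.subgroupOf N := QuotientGroup.mk ⟨t, htN⟩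
  have hq : q ^ 2 = 1 := by
    rw [← QuotientGroup.mk_pow, QuotientGroup.eq_one_iff]
    exact ht2
  have hodd : Odd (Nat.card (N ⧸ C.subgroupOf N)) :=
    hw.of_dvd_nat (Subgroup.relIndex_dvd_index_of_le Subgroup.le_normalizer)
  have hq1 : q = 1 := by
    rw [← orderOf_eq_one_iff, ← Nat.dvd_one, ← (Nat.coprime_two_left.2 hodd).gcd_eq_one]
    exact Nat.dvd_gcd (orderOf_dvd_of_pow_eq_one hq) (orderOf_dvd_natCard q)
  have htC : t ∈ C := (QuotientGroup.eq_one_iff (N := C.subgroupOf N) ⟨t, htN⟩).1 hq1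
  rw [mem_C, ht] at htC
  rw [sq]
  nth_rewrite 1 [← htC]
  exact inv_mul_cancel w

/-- Elements of a 2-subgroup with the same square differ by an element of order at most two. -/
theorem mul_inv_sq_eq_one_of_sq_eq_sq {G : Type*} [Group G] [Finite G]
    (h : ∀ x : G, (∃ n : ℕ, x ^ 2 ^ n = 1) → Odd (Subgroup.centralizer {x}).index)
    {Q : Subgroup G} (hQ : IsPGroup 2 Q) {u v : G}
    (hu : u ∈ Q) (hv : v ∈ Q) (huv : u ^ 2 = v ^ 2) : (u * v⁻¹) ^ 2 = 1 := by
  obtain ⟨n, hn⟩ := hQ ⟨u * v⁻¹, Q.mul_mem hu (Q.inv_mem hv)⟩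
  refine sq_eq_one_of_conj_eq_inv (t := u⁻¹) (h _ ⟨n, congrArg Subtype.val hn⟩) ?_
  calc u⁻¹ * (u * v⁻¹) * u⁻¹⁻¹ = v⁻¹ * u ^ 2 * u⁻¹ := by group
    _ = (u * v⁻¹)⁻¹ := by rw [huv]; group

/-- Elements of order at most two in a 2-subgroup commute. -/
theorem commute_of_sq_eq_one {G : Type*} [Group G] [Finite G]
    (h : ∀ x : G, (∃ n : ℕ, x ^ 2 ^ n = 1) → Odd (Subgroup.centralizer {x}).index)
    {Q : Subgroup G} (hQ : IsPGroup 2 Q) {u v : G}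
    (hu : u ∈ Q) (hv : v ∈ Q) (hu2 : u ^ 2 = 1) (hv2 : v ^ 2 = 1) : Commute u v := by
  have huv := mul_inv_sq_eq_one_of_sq_eq_sq h hQ hu hv (hu2.trans hv2.symm)
  have hu' : u⁻¹ = u := inv_eq_of_mul_eq_one_left (by rw [← sq, hu2])
  have hv' : v⁻¹ = v := inv_eq_of_mul_eq_one_left (by rw [← sq, hv2])
  rw [hv', sq] at huv
  have := inv_eq_of_mul_eq_one_left huv
  rw [mul_inv_rev, hu', hv'] at this
  exact this.symm

/-- If `z` commutes with the elements of order at most two of every 2-subgroup containing `z`,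
then it commutes with every element of every 2-subgroup containing `z`. -/
theorem commute_of_forall_sq_eq_one_commute {G : Type*} [Group G] [Finite G]
    (h : ∀ x : G, (∃ n : ℕ, x ^ 2 ^ n = 1) → Odd (Subgroup.centralizer {x}).index)
    {z : G}
    (hz : ∀ P : Subgroup G, IsPGroup 2 P → z ∈ P → ∀ w ∈ P, w ^ 2 = 1 → Commute w z)
    {Q : Subgroup G} (hQ : IsPGroup 2 Q) (hzQ : z ∈ Q) {x : G} (hx : x ∈ Q) : Commute x z := by
  obtain ⟨n, hn⟩ := hQ ⟨x, hx⟩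
  replace hn : x ^ 2 ^ n = 1 := congrArg Subtype.val hn
  induction n generalizing x with
  | zero =>
    obtain rfl : x = 1 := by simpa using hn
    exact Commute.one_left z
  | succ n ih =>
    have hn' : (x ^ 2) ^ 2 ^ n = 1 := by rw [← pow_mul, ← pow_succ', hn]
    have hzx : Commute (x ^ 2) z := ih (Q.pow_mem hx 2) hn'
    have two_not_dvd {g : G} (hg : ∃ n : ℕ, g ^ 2 ^ n = 1) :
        ¬ 2 ∣ (Subgroup.centralizer {g}).index := (h g hg).not_two_dvd_nat
    obtain ⟨P, hQP, hP⟩ := IsPGroup.exists_le_sylow_le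
      (hQ.to_le (inf_le_left (b := Subgroup.centralizer {x ^ 2}))) inf_le_right
      (two_not_dvd ⟨n, hn'⟩)
    have hxP : x ∈ P :=
      hQP ⟨hx, Subgroup.mem_centralizer_singleton_iff.2 ((Commute.refl x).pow_right 2)⟩
    have hzP : z ∈ P := hQP ⟨hzQ, Subgroup.mem_centralizer_singleton_iff.2 hzx.symm⟩
    obtain ⟨R, hxR, hR⟩ := IsPGroup.exists_le_sylow_le
      (hQ.to_le (Subgroup.zpowers_le.2 hx))
      (Subgroup.zpowers_le.2 (Subgroup.mem_centralizer_singleton_iff.2 rfl))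
      (two_not_dvd ⟨n + 1, hn⟩)
    have hR' : (R : Subgroup G) ≤ Subgroup.centralizer {x ^ 2} := fun r hr =>
      Subgroup.mem_centralizer_singleton_iff.2
        (Commute.pow_right (Subgroup.mem_centralizer_singleton_iff.1 (hR hr)) 2)
    obtain ⟨g, hg, hgR⟩ := Sylow.exists_conj_mem_of_le P R hP hR'
    have hyP : g * x * g⁻¹ ∈ P := (hgR x).1 (hxR (Subgroup.mem_zpowers x))
    have hyz : Commute (g * x * g⁻¹) z := by
      have hzR : g⁻¹ * z * g ∈ R := (hgR _).2 (by simpa [mul_assoc] using hzP)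
      have hxz : Commute x (g⁻¹ * z * g) :=
        (Subgroup.mem_centralizer_singleton_iff.1 (hR hzR)).symm
      simpa [mul_assoc] using (Commute.conj_iff g).2 hxz
    have hsq : x ^ 2 = (g * x * g⁻¹) ^ 2 := by
      rw [conj_pow, Subgroup.mem_centralizer_singleton_iff.1 hg, mul_inv_cancel_right]
    have hwz := hz P P.isPGroup' hzP _ (P.mul_mem hxP (P.inv_mem hyP))
      (mul_inv_sq_eq_one_of_sq_eq_sq h P.isPGroup' hxP hyP hsq)
    simpa only [inv_mul_cancel_right] using hwz.mul_left hyz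

/-- Camina–Herzog: if `|G : C_G(x)|` is odd for every 2-element `x` of a finite
group `G`, then the Sylow 2-subgroups of `G` are abelian. -/
theorem camina_herzog (G : Type*) [Group G] [Finite G]
    (h : ∀ x : G, (∃ n : ℕ, orderOf x = 2 ^ n) → Odd (Subgroup.centralizer {x}).index)
    (S : Sylow 2 G) : ∀ a b : (S : Subgroup G), a * b = b * a := by
  have h' : ∀ x : G, (∃ n : ℕ, x ^ 2 ^ n = 1) → Odd (Subgroup.centralizer {x}).index := by
    rintro x ⟨n, hn⟩
    obtain ⟨k, -, hk⟩ := (Nat.dvd_prime_pow Nat.prime_two).1 (orderOf_dvd_of_pow_eq_one hn)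
    exact h x ⟨k, hk⟩
  rintro ⟨a, ha⟩ ⟨b, hb⟩
  refine Subtype.ext (commute_of_forall_sq_eq_one_commute h' ?_ S.isPGroup' hb ha)
  refine fun P hP hbP w hw hw2 => (commute_of_forall_sq_eq_one_commute h' ?_ hP hw hbP).symm
  exact fun R hR hwR v hv hv2 => commute_of_sq_eq_one h' hR hv hwR hv2 hw2
end

section
/- Let G be a finite group with Sylow 2-subgroup S, and suppose every 2-element of G is G-conjugate to an element of Z(S). If U = Ω₁(S) denotes the subgroup generated by the involutions of S and U is abelian and strongly closed in S with respect to G, then U is contained in Z(S). -/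
/-- Two `p`-subgroups of `N` can be conjugated by an element of `N` into a common Sylow
`p`-subgroup of `G`. -/
theorem exists_conj_le_sylow {G : Type*} [Group G] [Finite G] {p : ℕ} [Fact p.Prime]
    (N H K : Subgroup G) (hH : IsPGroup p H) (hK : IsPGroup p K) (hHN : H ≤ N) (g : G)
    (hKN : ∀ k ∈ K, g * k * g⁻¹ ∈ N) :
    ∃ y ∈ N, ∃ P : Sylow p G, H ≤ P ∧ ∀ k ∈ K, (y * g) * k * (y * g)⁻¹ ∈ (P : Subgroup G) := by
  set L : Subgroup G := K.map (MulAut.conj g).toMonoidHom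
  have hLp : IsPGroup p L := hK.map _
  obtain ⟨Q, hQ⟩ :=
    (hH.comap_of_injective N.subtype N.subtype_injective).exists_le_sylow
  obtain ⟨R, hR⟩ :=
    (hLp.comap_of_injective N.subtype N.subtype_injective).exists_le_sylow
  obtain ⟨y, hy⟩ := MulAction.exists_smul_eq N R Q
  obtain ⟨P, hP⟩ := (Q.isPGroup'.map N.subtype).exists_le_sylow
  refine ⟨y, y.2, P, fun h hh => hP ⟨⟨h, hHN hh⟩, hQ hh, rfl⟩, fun k hk => hP ?_⟩
  have hkR : (⟨g * k * g⁻¹, hKN k hk⟩ : N) ∈ R := hR ⟨k, hk, rfl⟩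
  refine ⟨y * ⟨g * k * g⁻¹, hKN k hk⟩ * y⁻¹, ?_, by simp [mul_assoc]⟩
  rw [← hy]
  exact Subgroup.smul_mem_pointwise_smul _ (MulAut.conj y) _ hkR

/-- If `U` is strongly closed in `S` and a Sylow subgroup `P` contains a conjugate `U'` of `U`,
then every conjugate of an element of `U` lying in `P` lies in `U'`. -/
theorem exists_eq_conj_of_strongly_closed {G : Type*} [Group G] [Finite G] {p : ℕ}
    [Fact p.Prime] (S P : Sylow p G) (U : Subgroup G)
    (hsc : ∀ u ∈ U, ∀ g : G, g⁻¹ * u * g ∈ (S : Subgroup G) → g⁻¹ * u * g ∈ U)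
    (b : G) (hb : ∀ u ∈ U, b * u * b⁻¹ ∈ (P : Subgroup G))
    {d : G} (hd : d ∈ U) (hdP : d ∈ (P : Subgroup G)) :
    ∃ v ∈ U, d = b * v * b⁻¹ := by
  obtain ⟨x, hx⟩ := MulAction.exists_smul_eq G P S
  have key : ∀ z ∈ (P : Subgroup G), x * z * x⁻¹ ∈ (S : Subgroup G) := fun z hz => by
    rw [← hx]
    exact Subgroup.smul_mem_pointwise_smul _ (MulAut.conj x) _ hz
  have hxb : ∀ u ∈ U, (x * b) * u * (x * b)⁻¹ ∈ U := fun u hu => by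
    have := hsc u hu (x * b)⁻¹
    rw [inv_inv] at this
    refine this ?_
    convert key _ (hb u hu) using 1
    group
  have hxd : x * d * x⁻¹ ∈ U := by
    have := hsc d hd x⁻¹
    rw [inv_inv] at this
    exact this (key d hdP)
  have hinj : Function.Injective
      (fun u : U => (⟨(x * b) * u * (x * b)⁻¹, hxb u u.2⟩ : U)) := fun u v huv => by
    simpa using huv
  obtain ⟨v, hv⟩ := Finite.surjective_of_injective hinj ⟨_, hxd⟩
  refine ⟨v, v.2, ?_⟩
  have hv' : (x * b) * v * (x * b)⁻¹ = x * d * x⁻¹ := congrArg Subtype.val hv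
  calc d = x⁻¹ * (x * d * x⁻¹) * x := by group
    _ = b * v * b⁻¹ := by rw [← hv']; group

/-- Let `U` be an elementary abelian strongly closed subgroup of `S`. If `s ∈ S` is conjugate
into `Z(S)` and `s ^ 2` centralizes `U`, then `s` centralizes `U`. -/
theorem commute_of_sq_commute_of_strongly_closed {G : Type*} [Group G] [Finite G]
    (S : Sylow 2 G) (U : Subgroup G) (hUS : U ≤ S) (hU2 : ∀ u ∈ U, u * u = 1)
    (hab : ∀ u ∈ U, ∀ v ∈ U, Commute u v)
    (hsc : ∀ u ∈ U, ∀ g : G, g⁻¹ * u * g ∈ (S : Subgroup G) → g⁻¹ * u * g ∈ U)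
    {s g : G} (hs : s ∈ (S : Subgroup G))
    (hg : ∀ t ∈ (S : Subgroup G), Commute t (g⁻¹ * s * g))
    (hs2 : ∀ u ∈ U, Commute u (s ^ 2)) : ∀ u ∈ U, Commute u s := by
  have hUp : IsPGroup 2 U := S.isPGroup'.to_le hUS
  have hgs : ∀ t ∈ (S : Subgroup G), Commute (g * t * g⁻¹) s := fun t ht => by
    have h := (Commute.conj_iff g).2 (hg t ht)
    convert h using 1
    group
  set D : Subgroup G := U ⊓ Subgroup.centralizer {s}
  obtain ⟨y, hy, P, hDP, hP⟩ := exists_conj_le_sylow (Subgroup.centralizer {s}) D S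
    (hUp.to_le inf_le_left) S.isPGroup' inf_le_right g
    fun t ht => Subgroup.mem_centralizer_singleton_iff.2 (hgs t ht)
  have hys : Commute y s := Subgroup.mem_centralizer_singleton_iff.1 hy
  set B : Subgroup G := Subgroup.closure ((D : Set G) ∪ {s})
  have hDB : D ≤ B := fun d hd => Subgroup.subset_closure (Or.inl hd)
  have hsB : s ∈ B := Subgroup.subset_closure (Or.inr rfl)
  have hconj_le : ∀ x : G, (∀ b ∈ (D : Set G) ∪ {s}, x * b * x⁻¹ ∈ B) →
      ∀ b ∈ B, x * b * x⁻¹ ∈ B := fun x hx => by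
    have : B ≤ B.comap (MulAut.conj x).toMonoidHom := (Subgroup.closure_le _).2 hx
    exact this
  have hUB : ∀ u ∈ U, ∀ b ∈ B, u * b * u⁻¹ ∈ B := fun u hu => by
    apply hconj_le
    rintro b (hb | rfl)
    · rw [(hab u hu b hb.1).eq, mul_inv_cancel_right]
      exact hDB hb
    · have hu' : b * u * b⁻¹ ∈ U := by
        have := hsc u hu b⁻¹
        rw [inv_inv] at this
        exact this (mul_mem (mul_mem hs (hUS hu)) (inv_mem hs))
      have hbu : b * (b * u * b⁻¹) * b⁻¹ = u := by
        calc b * (b * u * b⁻¹) * b⁻¹ = (b ^ 2 * u) * (b ^ 2)⁻¹ := by rw [pow_two]; group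
          _ = u := by rw [← (hs2 u hu).eq, mul_inv_cancel_right]
      have hcom : u * (b * u * b⁻¹) ∈ D := by
        refine ⟨mul_mem hu hu', Subgroup.mem_centralizer_singleton_iff.2 ?_⟩
        have h1 : b * (u * (b * u * b⁻¹)) * b⁻¹ = u * (b * u * b⁻¹) := by
          calc b * (u * (b * u * b⁻¹)) * b⁻¹
              = (b * u * b⁻¹) * (b * (b * u * b⁻¹) * b⁻¹) := by group
            _ = (b * u * b⁻¹) * u := by rw [hbu]
            _ = _ := ((hab u hu _ hu').eq).symm
        exact (mul_inv_eq_iff_eq_mul.1 h1).symm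
      have hinv : u⁻¹ = u := inv_eq_of_mul_eq_one_left (hU2 u hu)
      have : u * b * u⁻¹ = u * (b * u * b⁻¹) * b := by rw [hinv]; group
      rw [this]
      exact mul_mem (hDB hcom) hsB
  have hUN : U ≤ Subgroup.normalizer (B : Set G) := fun u hu =>
    Subgroup.mem_normalizer_iff.2 fun b => ⟨hUB u hu b, fun h => by
      have := hUB u⁻¹ (inv_mem hu) _ h
      convert this using 1
      group⟩
  have hcent : ∀ u ∈ U, ∀ b ∈ B, Commute ((y * g) * u * (y * g)⁻¹) b := fun u hu => by
    have : B ≤ Subgroup.centralizer {(y * g) * u * (y * g)⁻¹} := by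
      refine (Subgroup.closure_le _).2 ?_
      rintro b (hb | rfl) <;> refine Subgroup.mem_centralizer_singleton_iff.2 ?_
      · obtain ⟨v, hv, rfl⟩ := exists_eq_conj_of_strongly_closed S P U hsc (y * g)
          (fun u hu => hP u (hUS hu)) hb.1 (hDP hb)
        exact ((Commute.conj_iff (y * g)).2 (hab v hv u hu)).eq
      · have h := (hys.mul_left (hgs u (hUS hu))).mul_left hys.inv_left
        have h2 : y * (g * u * g⁻¹) * y⁻¹ = (y * g) * u * (y * g)⁻¹ := by group
        rw [h2] at h
        exact h.eq.symm
    exact fun b hb => (Subgroup.mem_centralizer_singleton_iff.1 (this hb)).symm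
  obtain ⟨n, hn, Q, hUQ, hQ⟩ := exists_conj_le_sylow (Subgroup.normalizer (B : Set G)) U U hUp hUp
    hUN (y * g) fun u hu => Subgroup.centralizer_le_normalizer _ <|
      Subgroup.mem_centralizer_iff.2 fun b hb => (hcent u hu b hb).eq.symm
  intro u hu
  obtain ⟨v, hv, rfl⟩ := exists_eq_conj_of_strongly_closed S Q U hsc (n * (y * g)) hQ hu (hUQ hu)
  have hns : n⁻¹ * s * n ∈ B := by
    have := (Subgroup.mem_normalizer_iff.1 (inv_mem hn) s).1 hsB
    rwa [inv_inv] at this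
  have h := (Commute.conj_iff n).2 (hcent v hv _ hns)
  convert h using 1 <;> group

/-- If every 2-element of `G` is conjugate into `Z(S)` and `U = Ω₁(S)` is
abelian and strongly closed in `S` with respect to `G`, then `U ≤ Z(S)`. -/
theorem omega1_le_center_of_strongly_closed
    (G : Type*) [Group G] [Finite G] (S : Sylow 2 G)
    (hfus : ∀ x : G, (∃ n : ℕ, orderOf x = 2 ^ n) →
      ∃ g : G, g⁻¹ * x * g ∈ Subgroup.centralizer ((S : Subgroup G) : Set G) ⊓ S)
    (U : Subgroup G)
    (hU : U = Subgroup.closure {x : G | x ∈ (S : Subgroup G) ∧ x ^ 2 = 1})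
    (hab : ∀ u ∈ U, ∀ v ∈ U, Commute u v)
    (hsc : ∀ u ∈ U, ∀ g : G, g⁻¹ * u * g ∈ (S : Subgroup G) → g⁻¹ * u * g ∈ U) :
    U ≤ Subgroup.centralizer ((S : Subgroup G) : Set G) ⊓ S := by
  have hUS : U ≤ S := by
    rw [hU, Subgroup.closure_le]
    exact fun x hx => hx.1
  have hU2 : ∀ u ∈ U, u * u = 1 := fun u hu => by
    have hu' := hu
    rw [hU] at hu'
    induction hu' using Subgroup.closure_induction with
    | mem x hx => rw [← pow_two, hx.2]
    | one => simp
    | mul x y hx hy ihx ihy =>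
      rw [← hU] at hx hy
      rw [(hab y hy x hx).mul_mul_mul_comm, ihx hx, ihy hy, one_mul]
    | inv x hx ih =>
      rw [← hU] at hx
      rw [← mul_inv_rev, ih hx, inv_one]
  have horder : ∀ s ∈ (S : Subgroup G), ∃ n : ℕ, orderOf s = 2 ^ n := fun s hs => by
    obtain ⟨n, hn⟩ := IsPGroup.iff_orderOf.1 S.isPGroup' ⟨s, hs⟩
    exact ⟨n, by rw [← hn, Subgroup.orderOf_mk]⟩
  have hpow : ∀ k : ℕ, ∀ s ∈ (S : Subgroup G), (∀ u ∈ U, Commute u (s ^ 2 ^ k)) →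
      ∀ u ∈ U, Commute u s := by
    intro k
    induction k with
    | zero => simp
    | succ k ih =>
      intro s hs hsk
      obtain ⟨g, hg⟩ := hfus s (horder s hs)
      refine commute_of_sq_commute_of_strongly_closed S U hUS hU2 hab hsc hs
        (fun t ht => Subgroup.mem_centralizer_iff.1 hg.1 t ht) (ih _ (pow_mem hs 2) ?_)
      simpa only [← pow_mul, ← pow_succ'] using hsk
  refine le_inf (fun u hu => Subgroup.mem_centralizer_iff.2 fun s hs => ?_) hUS
  obtain ⟨n, hn⟩ := horder s hs
  refine (hpow n s hs (fun v _ => ?_) u hu).eq.symm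
  rw [← hn, pow_orderOf_eq_one]
  exact Commute.one_right v
end
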